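/- For any a ∈ ℕ with binary expansion a = Σ_{k=0}^{n-1} a_k 2^k and b_j = 2a_j - 1, the variance of μ_a equals n/2 + 1 - 2^{-n} - ½ Σ_{i=1}^{n-1} Σ_{k=0}^{n-1-i} b_{k+i} b_k / 2^i + Σ_{k=0}^{n-1} (b_k + b_{n-1-k})/2^{k+1}. -/

import Mathlib

open Filter

/-- Binary sum-of-digits function. -/
def s2 (n : ℕ) : ℕ := (Nat.digits 2 n).sum

/-- `hasDensity a d x` means `{n : s₂(n+a) - s₂(n) = d}` has asymptotic density `x`. -/
def hasDensity (a : ℕ) (d : ℤ) (x : ℝ) : Prop :=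
  Tendsto (fun N : ℕ =>
      (((Finset.range N).filter (fun n => (s2 (n + a) : ℤ) - s2 n = d)).card : ℝ) / N)
    atTop (nhds x)

lemma s2_even (m : ℕ) : s2 (2 * m) = s2 m := by
  rcases Nat.eq_zero_or_pos m with h | h
  · subst h; rfl
  · unfold s2
    rw [Nat.digits_def' (by norm_num) (by omega)]
    have h1 : 2 * m % 2 = 0 := by omega
    have h2 : 2 * m / 2 = m := by omega
    rw [h1, h2]; simp

lemma s2_odd (m : ℕ) : s2 (2 * m + 1) = s2 m + 1 := by
  unfold s2
  rw [Nat.digits_def' (by norm_num) (by omega)]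
  have h1 : (2 * m + 1) % 2 = 1 := by omega
  have h2 : (2 * m + 1) / 2 = m := by omega
  rw [h1, h2, List.sum_cons]; omega

lemma card_split (p : ℕ → Prop) [DecidablePred p] (N : ℕ) :
    ((Finset.range N).filter p).card =
      ((Finset.range ((N + 1) / 2)).filter (fun m => p (2 * m))).card +
      ((Finset.range (N / 2)).filter (fun m => p (2 * m + 1))).card := by
  simp only [← Nat.count_eq_card_filter_range]
  induction N with
  | zero => simp
  | succ N ih =>
    rw [Nat.count_succ, ih]
    rcases Nat.even_or_odd' N with ⟨m, h | h⟩
    · subst h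
      have h1 : (2 * m + 1 + 1) / 2 = m + 1 := by omega
      have h2 : (2 * m + 1) / 2 = m := by omega
      have h3 : (2 * m) / 2 = m := by omega
      rw [h1, h2, h3, Nat.count_succ]; omega
    · subst h
      have h1 : (2 * m + 1 + 1) / 2 = m + 1 := by omega
      have h2 : (2 * m + 1) / 2 = m := by omega
      have h3 : (2 * m + 1 + 1 + 1) / 2 = m + 1 := by omega
      rw [h1, h2, h3, Nat.count_succ (fun m => p (2 * m + 1))]; omega

lemma half_tendsto (c : ℕ) (hc : c ≤ 1) :
    Tendsto (fun N : ℕ => (((N + c) / 2 : ℕ) : ℝ) / N) atTop (nhds (1 / 2)) := by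
  have h0 : Tendsto (fun N : ℕ => (1 : ℝ) / N) atTop (nhds 0) :=
    tendsto_one_div_atTop_nhds_zero_nat
  have hlo : Tendsto (fun N : ℕ => (1 / 2 : ℝ) - 1 / N) atTop (nhds (1 / 2)) := by
    simpa using tendsto_const_nhds.sub h0
  have hhi : Tendsto (fun N : ℕ => (1 / 2 : ℝ) + 1 / N) atTop (nhds (1 / 2)) := by
    simpa using tendsto_const_nhds.add h0
  refine tendsto_of_tendsto_of_tendsto_of_le_of_le' hlo hhi ?_ ?_
  · filter_upwards [eventually_gt_atTop 0] with N hN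
    have hN' : (0 : ℝ) < N := by exact_mod_cast hN
    have h : N ≤ 2 * ((N + c) / 2) + 2 := by omega
    have h' : (N : ℝ) ≤ 2 * (((N + c) / 2 : ℕ) : ℝ) + 2 := by exact_mod_cast h
    rw [le_div_iff₀ hN', sub_mul, one_div_mul_cancel hN'.ne']
    linarith
  · filter_upwards [eventually_gt_atTop 0] with N hN
    have hN' : (0 : ℝ) < N := by exact_mod_cast hN
    have h : 2 * ((N + c) / 2) ≤ N + 2 := by omega
    have h' : 2 * (((N + c) / 2 : ℕ) : ℝ) ≤ (N : ℝ) + 2 := by exact_mod_cast h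
    rw [div_le_iff₀ hN', add_mul, one_div_mul_cancel hN'.ne']
    linarith

lemma half_comp (f : ℕ → ℕ) (x : ℝ) (c : ℕ) (hc : c ≤ 1)
    (hf : Tendsto (fun N : ℕ => (f N : ℝ) / N) atTop (nhds x)) :
    Tendsto (fun N : ℕ => (f ((N + c) / 2) : ℝ) / N) atTop (nhds (x / 2)) := by
  have ht : Tendsto (fun N : ℕ => (N + c) / 2) atTop atTop := by
    refine tendsto_atTop.2 fun b => ?_
    filter_upwards [eventually_ge_atTop (2 * b)] with N hN
    omega
  have h := (hf.comp ht).mul (half_tendsto c hc)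
  rw [mul_one_div] at h
  refine h.congr' ?_
  filter_upwards [eventually_ge_atTop 2] with N hN
  have h1 : (((N + c) / 2 : ℕ) : ℝ) ≠ 0 := by
    have : (N + c) / 2 ≠ 0 := by omega
    exact_mod_cast this
  simp only [Function.comp]
  field_simp

lemma dens_split (p q r : ℕ → Prop) [DecidablePred p] [DecidablePred q] [DecidablePred r]
    (hq : ∀ m, p (2 * m) ↔ q m) (hr : ∀ m, p (2 * m + 1) ↔ r m) (x y : ℝ)
    (hx : Tendsto (fun N : ℕ => (((Finset.range N).filter q).card : ℝ) / N) atTop (nhds x))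
    (hy : Tendsto (fun N : ℕ => (((Finset.range N).filter r).card : ℝ) / N) atTop (nhds y)) :
    Tendsto (fun N : ℕ => (((Finset.range N).filter p).card : ℝ) / N) atTop
      (nhds (x / 2 + y / 2)) := by
  have h1 := half_comp (fun N => ((Finset.range N).filter q).card) x 1 le_rfl hx
  have h2 := half_comp (fun N => ((Finset.range N).filter r).card) y 0 (by omega) hy
  refine (h1.add h2).congr fun N => ?_
  rw [card_split p N]
  simp only [hq, hr, add_zero]
  push_cast
  ring

lemma hasDensity_even (a : ℕ) (d : ℤ) (x : ℝ) (h : hasDensity a d x) :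
    hasDensity (2 * a) d x := by
  have := dens_split (fun n => (s2 (n + 2 * a) : ℤ) - s2 n = d)
    (fun n => (s2 (n + a) : ℤ) - s2 n = d) (fun n => (s2 (n + a) : ℤ) - s2 n = d)
    (fun m => by
      rw [show 2 * m + 2 * a = 2 * (m + a) by ring, s2_even, s2_even])
    (fun m => by
      rw [show 2 * m + 1 + 2 * a = 2 * (m + a) + 1 by ring, s2_odd, s2_odd]
      push_cast; constructor <;> intro h <;> linarith) x x h h
  rw [add_halves] at this
  exact this

lemma hasDensity_odd (a : ℕ) (d : ℤ) (x y : ℝ) (h : hasDensity a (d - 1) x)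
    (h' : hasDensity (a + 1) (d + 1) y) :
    hasDensity (2 * a + 1) d (x / 2 + y / 2) := by
  exact dens_split (fun n => (s2 (n + (2 * a + 1)) : ℤ) - s2 n = d)
    (fun n => (s2 (n + a) : ℤ) - s2 n = d - 1) (fun n => (s2 (n + (a + 1)) : ℤ) - s2 n = d + 1)
    (fun m => by
      rw [show 2 * m + (2 * a + 1) = 2 * (m + a) + 1 by ring, s2_even, s2_odd]
      push_cast; constructor <;> intro h <;> linarith)
    (fun m => by
      rw [show 2 * m + 1 + (2 * a + 1) = 2 * (m + (a + 1)) by ring, s2_odd, s2_even]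
      push_cast; constructor <;> intro h <;> linarith) x y h h'

lemma hasDensity_zero (d : ℤ) : hasDensity 0 d (if d = 0 then 1 else 0) := by
  unfold hasDensity
  split_ifs with h
  · subst h
    refine tendsto_const_nhds.congr' ?_
    filter_upwards [eventually_gt_atTop 0] with N hN
    have : (N : ℝ) ≠ 0 := by positivity
    simp [this]
  · have : ∀ N : ℕ, (((Finset.range N).filter
        (fun n => (s2 (n + 0) : ℤ) - s2 n = d)).card : ℝ) / N = 0 := by
      intro N
      rw [Finset.filter_false_of_mem]
      · simp
      · intro n _; simpa using fun h' => h h'.symm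
    simp only [this]
    exact tendsto_const_nhds

lemma s2_succ_le (n : ℕ) : s2 (n + 1) ≤ s2 n + 1 := by
  induction n using Nat.strong_induction_on with
  | _ n ih =>
    rcases Nat.even_or_odd' n with ⟨m, h | h⟩
    · subst h; rw [s2_odd, s2_even]
    · subst h
      have := ih m (by omega)
      rw [show 2 * m + 1 + 1 = 2 * (m + 1) by ring, s2_odd, s2_even]
      omega

lemma hasDensity_one_big (d : ℤ) (hd : 1 < d) : hasDensity 1 d 0 := by
  unfold hasDensity
  have : ∀ N : ℕ, (((Finset.range N).filter
      (fun n => (s2 (n + 1) : ℤ) - s2 n = d)).card : ℝ) / N = 0 := by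
    intro N
    rw [Finset.filter_false_of_mem]
    · simp
    · intro n _ h
      have := s2_succ_le n
      omega
  simp only [this]
  exact tendsto_const_nhds

lemma hasDensity_one (k : ℕ) : hasDensity 1 (1 - (k : ℤ)) ((1 / 2) ^ (k + 1)) := by
  induction k with
  | zero =>
    have h := hasDensity_odd 0 1 _ _ (hasDensity_zero _) (hasDensity_one_big (1 + 1) (by norm_num))
    norm_num at h ⊢
    exact h
  | succ k ih =>
    have h := hasDensity_odd 0 (1 - ((k + 1 : ℕ) : ℤ)) _ ((1 / 2) ^ (k + 1)) (hasDensity_zero _)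
      (by convert ih using 1; push_cast; ring)
    rw [if_neg (by push_cast; omega)] at h
    convert h using 1
    ring

/-- `a` has densities with total mass one, zero mean and second moment `v`. -/
def GoodVar (a : ℕ) (v : ℝ) : Prop :=
  ∃ ν : ℤ → ℝ, (∀ d, hasDensity a d (ν d)) ∧ HasSum ν 1 ∧
    HasSum (fun d : ℤ => (d : ℝ) * ν d) 0 ∧ HasSum (fun d : ℤ => (d : ℝ) ^ 2 * ν d) v

lemma good_zero : GoodVar 0 0 := by
  refine ⟨fun d => if d = 0 then 1 else 0, hasDensity_zero, ?_, ?_, ?_⟩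
  · exact hasSum_ite_eq 0 1
  · convert hasSum_zero using 2 with d
    by_cases h : d = 0 <;> simp [h]
  · convert hasSum_zero using 2 with d
    by_cases h : d = 0 <;> simp [h]

lemma good_even (a : ℕ) (v : ℝ) (h : GoodVar a v) : GoodVar (2 * a) v := by
  obtain ⟨ν, h1, h2⟩ := h
  exact ⟨ν, fun d => hasDensity_even a d _ (h1 d), h2⟩

lemma hasSum_conv {ι : Type} {f g : ι → ℝ} {x y : ℝ} (h : HasSum g y) (hf : f = g)
    (hx : x = y) : HasSum f x := by rw [hf, hx]; exact h

lemma good_conv {a c : ℕ} {x y : ℝ} (h : GoodVar c y) (ha : a = c) (hx : x = y) :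
    GoodVar a x := by rw [ha, hx]; exact h

lemma good_odd (a : ℕ) (v w : ℝ) (h : GoodVar a v) (h' : GoodVar (a + 1) w) :
    GoodVar (2 * a + 1) ((v + w) / 2 + 1) := by
  obtain ⟨ν, h1, h2, h3, h4⟩ := h
  obtain ⟨ρ, k1, k2, k3, k4⟩ := h'
  have shift : ∀ (c : ℤ) (f : ℤ → ℝ) (s : ℝ), HasSum (fun d => f (d - c)) s ↔ HasSum f s :=
    fun c f s => (Equiv.subRight c).hasSum_iff (f := f)
  refine ⟨fun d => ν (d - 1) / 2 + ρ (d + 1) / 2,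
    fun d => hasDensity_odd a d _ _ (h1 _) (k1 _), ?_, ?_, ?_⟩
  · have e1 := (shift 1 ν 1).2 h2
    have e2 := (shift (-1) ρ 1).2 k2
    refine hasSum_conv ((e1.div_const 2).add (e2.div_const 2)) ?_ ?_
    · funext d; simp
    · norm_num
  · have e1 := (shift 1 _ _).2 (h3.add h2)
    have e2 := (shift (-1) _ _).2 (k3.sub k2)
    refine hasSum_conv ((e1.div_const 2).add (e2.div_const 2)) ?_ ?_
    · funext d; simp only [sub_neg_eq_add]; push_cast; ring
    · norm_num
  · have e1 := (shift 1 _ _).2 ((h4.add (h3.mul_left 2)).add h2)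
    have e2 := (shift (-1) _ _).2 ((k4.sub (k3.mul_left 2)).add k2)
    refine hasSum_conv ((e1.div_const 2).add (e2.div_const 2)) ?_ ?_
    · funext d; simp only [sub_neg_eq_add]; push_cast; ring
    · ring

lemma good_one : GoodVar 1 2 := by
  have inj : Function.Injective (fun k : ℕ => (1 : ℤ) - k) := fun x y h => by
    simp only at h; omega
  have hr : ‖(1 / 2 : ℝ)‖ < 1 := by rw [Real.norm_eq_abs, abs_of_pos] <;> norm_num
  have g0 : HasSum (fun k : ℕ => (1 / 2 : ℝ) ^ k) 2 := by
    have h := hasSum_geometric_of_norm_lt_one hr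
    norm_num at h ⊢
    exact h
  have g1 : HasSum (fun k : ℕ => (k : ℝ) * (1 / 2 : ℝ) ^ k) 2 := by
    have h := hasSum_coe_mul_geometric_of_norm_lt_one hr
    norm_num at h ⊢
    exact h
  have g2 : HasSum (fun k : ℕ => ((k + 2).choose 2 : ℝ) * (1 / 2 : ℝ) ^ k) 8 := by
    have h := hasSum_choose_mul_geometric_of_norm_lt_one 2 hr
    norm_num at h ⊢
    exact h
  have hch : ∀ k : ℕ, ((k + 2).choose 2 : ℝ) = ((k : ℝ) + 2) * (k + 1) / 2 := by
    intro k
    rw [Nat.cast_choose_two]; push_cast; ring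
  set ν : ℤ → ℝ := fun d => if d ≤ 1 then (1 / 2) ^ ((1 - d).toNat + 1) else 0 with hν
  have hval : ∀ k : ℕ, ν (1 - (k : ℤ)) = (1 / 2) ^ (k + 1) := by
    intro k
    simp only [hν]
    rw [if_pos (by omega), show (1 - (1 - (k : ℤ))).toNat = k by omega]
  have hout : ∀ d : ℤ, 1 < d → ν d = 0 := by
    intro d hd
    simp only [hν]
    rw [if_neg (by omega)]
  have hrange : ∀ d : ℤ, d ∉ Set.range (fun k : ℕ => (1 : ℤ) - k) → 1 < d := by
    intro d hd
    by_contra hlt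
    exact hd ⟨(1 - d).toNat, by simp only; omega⟩
  refine ⟨ν, ?_, ?_, ?_, ?_⟩
  · intro d
    by_cases h : 1 < d
    · rw [hout d h]; exact hasDensity_one_big d h
    · obtain ⟨k, rfl⟩ : ∃ k : ℕ, d = 1 - (k : ℤ) := ⟨(1 - d).toNat, by omega⟩
      rw [hval]; exact hasDensity_one k
  · rw [← inj.hasSum_iff (fun d hd => hout d (hrange d hd))]
    refine hasSum_conv (g0.div_const 2) ?_ ?_
    · funext k; simp only [Function.comp, hval]; ring
    · norm_num
  · rw [← inj.hasSum_iff (fun d hd => by rw [hout d (hrange d hd), mul_zero])]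
    refine hasSum_conv ((g0.sub g1).div_const 2) ?_ ?_
    · funext k; simp only [Function.comp, hval]; push_cast; ring
    · norm_num
  · rw [← inj.hasSum_iff (fun d hd => by rw [hout d (hrange d hd), mul_zero])]
    refine hasSum_conv ((((g2.mul_left 2).sub (g1.mul_left 5)).sub (g0.mul_left 1)).div_const 2) ?_ ?_
    · funext k; simp only [Function.comp, hval, hch]; push_cast; ring
    · norm_num

/-- The right-hand side of the variance formula. -/
noncomputable def rhsVar (n : ℕ) (b : ℕ → ℝ) : ℝ :=
  (n : ℝ) / 2 + 1 - 1 / 2 ^ n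
        - (1 / 2) * ∑ i ∈ Finset.Icc 1 (n - 1), ∑ k ∈ Finset.range (n - i),
            b (k + i) * b k / 2 ^ i
        + ∑ k ∈ Finset.range n, (b k + b (n - 1 - k)) / 2 ^ (k + 1)

/-- The weighted digit sum. -/
noncomputable def wsum (n : ℕ) (b : ℕ → ℝ) : ℝ := ∑ k ∈ Finset.range n, b k / 2 ^ (k + 1)

lemma wsum_succ (n : ℕ) (b : ℕ → ℝ) :
    wsum (n + 1) b = b 0 / 2 + wsum n (fun k => b (k + 1)) / 2 := by
  unfold wsum
  rw [Finset.sum_range_succ', Finset.sum_div, add_comm]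
  congr 1
  · simp
  · refine Finset.sum_congr rfl fun k _ => ?_
    rw [pow_succ (2 : ℝ) (k + 1)]; field_simp

lemma dbl_succ (n : ℕ) (b : ℕ → ℝ) :
    ∑ i ∈ Finset.Icc 1 (n + 1 - 1), ∑ k ∈ Finset.range (n + 1 - i), b (k + i) * b k / 2 ^ i =
    (∑ i ∈ Finset.Icc 1 (n - 1), ∑ k ∈ Finset.range (n - i),
      b (k + i + 1) * b (k + 1) / 2 ^ i) + b 0 * wsum n (fun k => b (k + 1)) := by
  have h1 : ∀ i ∈ Finset.Icc 1 n, ∑ k ∈ Finset.range (n + 1 - i), b (k + i) * b k / 2 ^ i =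
      (∑ k ∈ Finset.range (n - i), b (k + i + 1) * b (k + 1) / 2 ^ i) + b 0 * (b i / 2 ^ i) := by
    intro i hi
    rw [Finset.mem_Icc] at hi
    rw [show n + 1 - i = n - i + 1 by omega, Finset.sum_range_succ']
    congr 1
    · refine Finset.sum_congr rfl fun k _ => ?_
      rw [show k + 1 + i = k + i + 1 by ring]
    · rw [zero_add]; ring
  rw [show n + 1 - 1 = n by omega, Finset.sum_congr rfl h1, Finset.sum_add_distrib]
  congr 1
  · symm
    refine Finset.sum_subset (Finset.Icc_subset_Icc_right (by omega)) fun i hi hi' => ?_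
    rw [Finset.mem_Icc] at hi hi'
    rw [show n - i = 0 by omega]; simp
  · rw [← Finset.mul_sum]
    unfold wsum
    congr 1
    rw [Finset.range_eq_Ico, Finset.sum_Ico_add' (fun k => b k / 2 ^ k) 0 n 1]
    rfl

lemma rev_succ (n : ℕ) (b : ℕ → ℝ) :
    ∑ k ∈ Finset.range (n + 1), b (n + 1 - 1 - k) / 2 ^ (k + 1) =
    ∑ k ∈ Finset.range n, b (n - 1 - k + 1) / 2 ^ (k + 1) + b 0 / 2 ^ (n + 1) := by
  rw [Finset.sum_range_succ]
  congr 1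
  · refine Finset.sum_congr rfl fun k hk => ?_
    rw [Finset.mem_range] at hk
    rw [show n + 1 - 1 - k = n - 1 - k + 1 by omega]
  · simp

lemma rhs_succ (n : ℕ) (b : ℕ → ℝ) :
    rhsVar (n + 1) b = rhsVar n (fun k => b (k + 1)) +
      (1 + b 0) / 2 * (1 + 1 / 2 ^ n - wsum n (fun k => b (k + 1))) := by
  have hw := wsum_succ n b
  unfold rhsVar
  rw [dbl_succ]
  simp only [add_div, Finset.sum_add_distrib]
  rw [rev_succ]
  unfold wsum at *
  rw [hw, pow_succ]
  push_cast
  ring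

lemma good_main (n : ℕ) : ∀ (dig : ℕ → ℕ) (_ : ∀ j, dig j ≤ 1) (b : ℕ → ℝ)
    (_ : ∀ j, b j = 2 * (dig j : ℝ) - 1),
    GoodVar (∑ k ∈ Finset.range n, dig k * 2 ^ k) (rhsVar n b) ∧
    GoodVar (∑ k ∈ Finset.range n, dig k * 2 ^ k + 1)
      (rhsVar n b + 2 / 2 ^ n - 2 * wsum n b) := by
  induction n with
  | zero =>
    intro dig _ b _
    constructor
    · simpa [rhsVar] using good_zero
    · simpa [rhsVar, wsum] using good_one
  | succ n ih =>
    intro dig hdig b hb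
    obtain ⟨i1, i2⟩ := ih (fun k => dig (k + 1)) (fun j => hdig _) (fun k => b (k + 1))
      (fun j => hb _)
    have ha : ∑ k ∈ Finset.range (n + 1), dig k * 2 ^ k =
        2 * (∑ k ∈ Finset.range n, dig (k + 1) * 2 ^ k) + dig 0 := by
      rw [Finset.sum_range_succ', Finset.mul_sum]
      simp only [pow_zero, mul_one]
      congr 1
      exact Finset.sum_congr rfl fun k _ => by ring
    rw [ha, rhs_succ, wsum_succ]
    generalize (∑ k ∈ Finset.range n, dig (k + 1) * 2 ^ k) = a' at *
    generalize rhsVar n (fun k => b (k + 1)) = R at *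
    generalize wsum n (fun k => b (k + 1)) = W at *
    have h0 := hb 0
    have hodd := good_odd _ _ _ i1 i2
    rcases Nat.le_one_iff_eq_zero_or_eq_one.1 (hdig 0) with h | h
    · rw [h] at h0 ⊢
      rw [h0]
      constructor
      · refine good_conv (good_even _ _ i1) (by ring) ?_
        push_cast; ring
      · refine good_conv hodd (by ring) ?_
        rw [pow_succ]; push_cast; field_simp; ring
    · rw [h] at h0 ⊢
      rw [h0]
      constructor
      · refine good_conv hodd (by ring) ?_
        push_cast; field_simp; ring
      · refine good_conv (good_even _ _ i2) (by ring) ?_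
        rw [pow_succ]; push_cast; field_simp; ring

theorem variance_formula (a n : ℕ) (dig : ℕ → ℕ) (hdig : ∀ j, dig j ≤ 1)
    (ha : a = ∑ k ∈ Finset.range n, dig k * 2 ^ k)
    (b : ℕ → ℝ) (hb : ∀ j, b j = 2 * (dig j : ℝ) - 1)
    (μ : ℤ → ℝ) (hμ : ∀ d, hasDensity a d (μ d))
    (hsum : Summable fun d : ℤ => (d : ℝ) ^ 2 * μ d) :
    ∑' d : ℤ, (d : ℝ) ^ 2 * μ d =
      (n : ℝ) / 2 + 1 - 1 / 2 ^ n
        - (1 / 2) * ∑ i ∈ Finset.Icc 1 (n - 1), ∑ k ∈ Finset.range (n - i),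
            b (k + i) * b k / 2 ^ i
        + ∑ k ∈ Finset.range n, (b k + b (n - 1 - k)) / 2 ^ (k + 1) := by
  obtain ⟨ν, h1, _, _, h4⟩ := (good_main n dig hdig b hb).1
  rw [← ha] at h1
  have : μ = ν := funext fun d => tendsto_nhds_unique (hμ d) (h1 d)
  rw [this]
  exact h4.tsum_eq
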